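/- arXiv:2503.09434 — 8 statements merged into one kernel-verified Lean document; each statement's English description precedes it below -/
import Mathlib

section
/- Let E be a real inner product space, ν ∈ ℝ, and let X : E → E satisfy the monotonicity condition ⟨X y − X z, y − z⟩ ≤ −ν‖y − z‖² for all y, z ∈ E. If y, z : [0, T] → E are differentiable curves with y′(t) = X(y(t)) and z′(t) = X(z(t)) for all t ∈ [0, T], then ‖y(t) − z(t)‖ ≤ e^{−ν t}‖y(0) − z(0)‖ for all t ∈ [0, T]. -/
open scoped RealInnerProductSpace

/-!
The difference `u = y - z` of two solutions satisfies `⟪u, u'⟫ ≤ -ν ‖u‖²`, so that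
`(‖u‖²)' = 2 ⟪u, u'⟫ ≤ -2ν ‖u‖²`. Grönwall's inequality for the scalar function `‖u‖²`, valid for
either sign of `ν`, bounds `‖u‖²`, and the claim is the square root of that bound. Working with
`‖u‖²` rather than `‖u‖` avoids the non-differentiability of the norm where `u` vanishes.
-/

open Set

theorem le_mul_exp_of_deriv_right_le {f f' : ℝ → ℝ} {K a b : ℝ}
    (hf : ContinuousOn f (Icc a b)) (hf' : ∀ t ∈ Ico a b, HasDerivWithinAt f (f' t) (Ici t) t)
    (bound : ∀ t ∈ Ico a b, f' t ≤ K * f t) :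
    ∀ t ∈ Icc a b, f t ≤ f a * Real.exp (K * (t - a)) := by
  intro t ht
  rw [← gronwallBound_ε0]
  exact le_gronwallBound_of_liminf_deriv_right_le hf
    (fun s hs _ hr => (hf' s hs).liminf_right_slope_le hr) le_rfl
    (fun s hs => (bound s hs).trans_eq (add_zero _).symm) t ht

section InnerProductSpace

variable {E : Type*} [NormedAddCommGroup E] [InnerProductSpace ℝ E] {a b : ℝ}

theorem norm_le_exp_mul_of_inner_deriv_right_le {u u' : ℝ → E} {K : ℝ}
    (hu : ContinuousOn u (Icc a b)) (hu' : ∀ t ∈ Ico a b, HasDerivWithinAt u (u' t) (Ici t) t)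
    (bound : ∀ t ∈ Ico a b, ⟪u t, u' t⟫ ≤ K * ‖u t‖ ^ 2) :
    ∀ t ∈ Icc a b, ‖u t‖ ≤ Real.exp (K * (t - a)) * ‖u a‖ := by
  intro t ht
  have norm_sq_le : ‖u t‖ ^ 2 ≤ ‖u a‖ ^ 2 * Real.exp (2 * K * (t - a)) :=
    le_mul_exp_of_deriv_right_le (f := fun s => ‖u s‖ ^ 2) (hu.norm.pow 2)
      (fun s hs => (hu' s hs).norm_sq) (fun s hs => by linarith [bound s hs]) t ht
  refine le_of_sq_le_sq ?_ (by positivity)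
  calc ‖u t‖ ^ 2
    _ ≤ ‖u a‖ ^ 2 * Real.exp (2 * K * (t - a)) := norm_sq_le
    _ = (Real.exp (K * (t - a)) * ‖u a‖) ^ 2 := by
      rw [mul_pow, ← Real.exp_nat_mul, mul_comm, Nat.cast_ofNat, mul_assoc 2 K]

theorem flow_contractive_of_monotone_general {ν : ℝ} {X : ℝ → E → E} {s : ℝ → Set E}
    (hmono : ∀ t ∈ Ico a b, ∀ p ∈ s t, ∀ q ∈ s t,
      ⟪X t p - X t q, p - q⟫ ≤ -ν * ‖p - q‖ ^ 2)
    {y z : ℝ → E}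
    (hy : ContinuousOn y (Icc a b))
    (hy' : ∀ t ∈ Ico a b, HasDerivWithinAt y (X t (y t)) (Ici t) t)
    (hys : ∀ t ∈ Ico a b, y t ∈ s t)
    (hz : ContinuousOn z (Icc a b))
    (hz' : ∀ t ∈ Ico a b, HasDerivWithinAt z (X t (z t)) (Ici t) t)
    (hzs : ∀ t ∈ Ico a b, z t ∈ s t) :
    ∀ t ∈ Icc a b, ‖y t - z t‖ ≤ Real.exp (-ν * (t - a)) * ‖y a - z a‖ :=
  norm_le_exp_mul_of_inner_deriv_right_le (hy.sub hz) (fun t ht => (hy' t ht).sub (hz' t ht))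
    fun t ht => (real_inner_comm _ _).trans_le (hmono t ht _ (hys t ht) _ (hzs t ht))

end InnerProductSpace

/-- If `X` satisfies the monotonicity condition
`⟪X y − X z, y − z⟫ ≤ −ν‖y − z‖²`, then any two exact solutions of
`y' = X(y)` on `[0, T]` contract at rate `e^{−ν t}`. -/
theorem flow_contractive_of_monotone
    {E : Type*} [NormedAddCommGroup E] [InnerProductSpace ℝ E]
    (ν : ℝ) (X : E → E)
    (hmono : ∀ y z : E, ⟪X y - X z, y - z⟫ ≤ -ν * ‖y - z‖ ^ 2)
    (T : ℝ) (y z : ℝ → E)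
    (hy : ∀ t ∈ Set.Icc (0 : ℝ) T, HasDerivAt y (X (y t)) t)
    (hz : ∀ t ∈ Set.Icc (0 : ℝ) T, HasDerivAt z (X (z t)) t) :
    ∀ t ∈ Set.Icc (0 : ℝ) T, ‖y t - z t‖ ≤ Real.exp (-ν * t) * ‖y 0 - z 0‖ := by
  simpa only [sub_zero] using
    flow_contractive_of_monotone_general (X := fun _ => X) (s := fun _ => univ)
      (fun _ _ p _ q _ => hmono p q)
      (HasDerivAt.continuousOn hy) (fun t ht => (hy t (Ico_subset_Icc_self ht)).hasDerivWithinAt)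
      (fun t _ => mem_univ (y t))
      (HasDerivAt.continuousOn hz) (fun t ht => (hz t (Ico_subset_Icc_self ht)).hasDerivWithinAt)
      (fun t _ => mem_univ (z t))
end

section
/- Let E be a real inner product space, α > 0, and let X : E → E satisfy the α-cocoercivity condition ⟨X y − X z, y − z⟩ ≤ −α‖X y − X z‖² for all y, z ∈ E. If y, z : [0, T] → E are differentiable curves with y′(t) = X(y(t)) and z′(t) = X(z(t)) for all t ∈ [0, T], then the flow is non-expansive: ‖y(t) − z(t)‖ ≤ ‖y(0) − z(0)‖ for all t ∈ [0, T]. -/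
open scoped RealInnerProductSpace

/-! The squared distance between two solutions has derivative `2 ⟪y - z, X y - X z⟫`, which
cocoercivity makes nonpositive; hence the distance itself decreases along the flow. -/

section Dissipative

variable {E : Type*} [NormedAddCommGroup E] [InnerProductSpace ℝ E]

/-- Dissipativity of a vector field on a set, i.e. monotonicity of `-X` in the sense of
monotone operators. This is the one-sided Lipschitz condition with constant `0`. -/
def IsDissipativeOn (X : E → E) (s : Set E) : Prop :=
  ∀ ⦃y⦄, y ∈ s → ∀ ⦃z⦄, z ∈ s → ⟪X y - X z, y - z⟫ ≤ 0

lemma isDissipativeOn_of_cocoercive {X : E → E} {s : Set E} {α : ℝ} (hα : 0 ≤ α)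
    (hX : ∀ y ∈ s, ∀ z ∈ s, ⟪X y - X z, y - z⟫ ≤ -α * ‖X y - X z‖ ^ 2) :
    IsDissipativeOn X s := fun y hy z hz ↦
  (hX y hy z hz).trans <| mul_nonpos_of_nonpos_of_nonneg (neg_nonpos.mpr hα) (sq_nonneg _)

lemma antitoneOn_norm_of_inner_deriv_nonpos {D : Set ℝ} (hD : Convex ℝ D) {f f' : ℝ → E}
    (hf : ContinuousOn f D) (hf' : ∀ t ∈ interior D, HasDerivAt f (f' t) t)
    (hinner : ∀ t ∈ interior D, ⟪f' t, f t⟫ ≤ 0) :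
    AntitoneOn (fun t ↦ ‖f t‖) D := by
  have hsq : AntitoneOn (fun t ↦ ‖f t‖ ^ 2) D := by
    refine antitoneOn_of_hasDerivWithinAt_nonpos hD (hf.norm.pow 2)
      (fun t ht ↦ (hf' t ht).norm_sq.hasDerivWithinAt) fun t ht ↦ ?_
    rw [real_inner_comm]
    exact mul_nonpos_of_nonneg_of_nonpos zero_le_two (hinner t ht)
  exact fun a ha b hb hab ↦ (sq_le_sq₀ (norm_nonneg _) (norm_nonneg _)).mp (hsq ha hb hab)

theorem flow_nonexpansive_of_cocoercive_general {D : Set ℝ} (hD : Convex ℝ D)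
    {X : ℝ → E → E} {s : ℝ → Set E} (hX : ∀ t ∈ interior D, IsDissipativeOn (X t) (s t))
    {y z : ℝ → E} (hyc : ContinuousOn y D) (hzc : ContinuousOn z D)
    (hy : ∀ t ∈ interior D, HasDerivAt y (X t (y t)) t ∧ y t ∈ s t)
    (hz : ∀ t ∈ interior D, HasDerivAt z (X t (z t)) t ∧ z t ∈ s t) :
    AntitoneOn (fun t ↦ ‖y t - z t‖) D :=
  antitoneOn_norm_of_inner_deriv_nonpos hD (hyc.sub hzc)
    (fun t ht ↦ (hy t ht).1.sub (hz t ht).1) fun t ht ↦ hX t ht (hy t ht).2 (hz t ht).2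

end Dissipative

/-- If `X` is `α`-cocoercive with `α > 0`, then the exact flow of `y' = X(y)`
is non-expansive on `[0, T]`. -/
theorem flow_nonexpansive_of_cocoercive
    {E : Type*} [NormedAddCommGroup E] [InnerProductSpace ℝ E]
    (α : ℝ) (hα : 0 < α) (X : E → E)
    (hcoco : ∀ y z : E, ⟪X y - X z, y - z⟫ ≤ -α * ‖X y - X z‖ ^ 2)
    (T : ℝ) (y z : ℝ → E)
    (hy : ∀ t ∈ Set.Icc (0 : ℝ) T, HasDerivAt y (X (y t)) t)
    (hz : ∀ t ∈ Set.Icc (0 : ℝ) T, HasDerivAt z (X (z t)) t) :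
    ∀ t ∈ Set.Icc (0 : ℝ) T, ‖y t - z t‖ ≤ ‖y 0 - z 0‖ := by
  have hX : IsDissipativeOn X Set.univ :=
    isDissipativeOn_of_cocoercive hα.le fun y _ z _ ↦ hcoco y z
  have hanti : AntitoneOn (fun t ↦ ‖y t - z t‖) (Set.Icc 0 T) :=
    flow_nonexpansive_of_cocoercive_general (convex_Icc 0 T) (fun _ _ ↦ hX)
      (HasDerivAt.continuousOn hy) (HasDerivAt.continuousOn hz)
      (fun t ht ↦ ⟨hy t (interior_subset ht), Set.mem_univ _⟩)
      (fun t ht ↦ ⟨hz t (interior_subset ht), Set.mem_univ _⟩)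
  exact fun t ht ↦ hanti (Set.left_mem_Icc.mpr (ht.1.trans ht.2)) ht ht.1
end

section
/- The function κ ↦ (1 − cos κ · (sin κ)/κ) − sin κ · √(1 − ((sin κ)/κ)²) is monotone non-decreasing on the interval (0, π]: for all κ₁, κ₂ with 0 < κ₁ ≤ κ₂ ≤ π, one has (1 − cos κ₁ · (sin κ₁)/κ₁) − sin κ₁ · √(1 − ((sin κ₁)/κ₁)²) ≤ (1 − cos κ₂ · (sin κ₂)/κ₂) − sin κ₂ · √(1 − ((sin κ₂)/κ₂)²). -/
/-!
Put `θ x = x - arccos (sinc x)`. By the addition formula for the cosine, the function in question is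
`1 - cos (θ x)`, so it increases as long as `θ` increases from `θ 0 = 0` within `[0, π]`.
That `θ' ≥ 0` amounts to `|sinc'| ≤ √(1 - sinc²)`, which unfolds to the inequality
`(sinc x - cos x)² ≤ x² - sin² x`.
-/

open Real Set

lemma mul_sinc (x : ℝ) : x * sinc x = sin x := by
  rcases eq_or_ne x 0 with rfl | hx
  · simp
  · rw [sinc_of_ne_zero hx, mul_div_cancel₀ _ hx]

lemma abs_sinc_lt_one {x : ℝ} (hx : x ≠ 0) : |sinc x| < 1 := by
  rw [sinc_of_ne_zero hx, abs_div, div_lt_one (abs_pos.2 hx)]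
  exact abs_sin_lt_abs hx

lemma one_sub_sq_div_six_le_sinc (x : ℝ) : 1 - x ^ 2 / 6 ≤ sinc x := by
  wlog hx : 0 ≤ x generalizing x
  · simpa using this (-x) (by linarith)
  rcases hx.eq_or_lt with rfl | hx
  · simp
  · rw [sinc_of_ne_zero hx.ne', le_div_iff₀ hx]
    linarith [sin_gt_sub_cube hx]

lemma hasDerivAt_sinc {x : ℝ} (hx : x ≠ 0) : HasDerivAt sinc ((cos x - sinc x) / x) x := by
  have h_div : HasDerivAt (fun y ↦ sin y / y) ((cos x - sinc x) / x) x := by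
    refine ((hasDerivAt_sin x).fun_div (hasDerivAt_id' x) hx).congr_deriv ?_
    rw [sinc_of_ne_zero hx]
    field_simp
  exact h_div.congr_of_eventuallyEq
    ((eventually_ne_nhds hx).mono fun _ hy ↦ sinc_of_ne_zero hy)

lemma sq_sinc_sub_cos_le (x : ℝ) : (sinc x - cos x) ^ 2 ≤ x ^ 2 - sin x ^ 2 := by
  have h_lower := one_sub_sq_div_six_le_sinc x
  have h_cos := one_sub_sq_div_two_le_cos (x := x)
  suffices h : (1 - sinc x) ^ 2 + 2 * sinc x * (1 - cos x) ≤ x ^ 2 by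
    linarith [sin_sq_add_cos_sq x]
  rcases le_total 0 (sinc x) with h_nonneg | h_nonpos
  · calc
      (1 - sinc x) ^ 2 + 2 * sinc x * (1 - cos x)
        = (1 - sinc x) * (1 - sinc x) + sinc x * (2 * (1 - cos x)) := by ring
      _ ≤ (1 - sinc x) * x ^ 2 + sinc x * x ^ 2 := by
        gcongr
        · linarith [sinc_le_one x]
        · linarith [sq_nonneg x]
        · linarith
      _ = x ^ 2 := by ring
  · calc
      (1 - sinc x) ^ 2 + 2 * sinc x * (1 - cos x)
        ≤ (1 - sinc x) ^ 2 := by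
        linarith [mul_nonpos_of_nonpos_of_nonneg h_nonpos (sub_nonneg.2 (cos_le_one x))]
      _ = (1 - sinc x) * (1 - sinc x) := sq _
      _ ≤ 2 * (1 - sinc x) := by
        gcongr
        · linarith
        · linarith [neg_one_le_sinc x]
      _ ≤ x ^ 2 := by linarith [sq_nonneg x]

lemma abs_deriv_sinc_le_sqrt {x : ℝ} (hx : x ≠ 0) : |deriv sinc x| ≤ √(1 - sinc x ^ 2) := by
  refine abs_le_sqrt ?_
  rw [(hasDerivAt_sinc hx).deriv, div_pow, div_le_iff₀ (by positivity)]
  calc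
    (cos x - sinc x) ^ 2 = (sinc x - cos x) ^ 2 := sub_sq_comm _ _
    _ ≤ x ^ 2 - sin x ^ 2 := sq_sinc_sub_cos_le x
    _ = (1 - sinc x ^ 2) * x ^ 2 := by rw [← mul_sinc]; ring

lemma monotoneOn_sub_arccos_sinc : MonotoneOn (fun x ↦ x - arccos (sinc x)) (Ici 0) := by
  have h_deriv {x : ℝ} (hx : x ≠ 0) : HasDerivAt (fun y ↦ y - arccos (sinc y))
      (1 - -(1 / √(1 - sinc x ^ 2)) * deriv sinc x) x := by
    have h_sinc := abs_lt.1 (abs_sinc_lt_one hx)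
    exact (hasDerivAt_id' x).sub <| (hasDerivAt_arccos h_sinc.1.ne' h_sinc.2.ne).comp x
      (hasDerivAt_sinc hx).differentiableAt.hasDerivAt
  have h_ne {x : ℝ} (hx : x ∈ interior (Ici (0 : ℝ))) : x ≠ 0 := by
    rw [interior_Ici] at hx
    exact hx.ne'
  refine monotoneOn_of_deriv_nonneg (convex_Ici 0)
    (continuous_id.sub (continuous_arccos.comp continuous_sinc)).continuousOn
    (fun x hx ↦ (h_deriv (h_ne hx)).differentiableAt.differentiableWithinAt) fun x hx ↦ ?_
  have h_ratio : -deriv sinc x / √(1 - sinc x ^ 2) ≤ 1 :=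
    div_le_one_of_le₀ ((neg_le_abs _).trans (abs_deriv_sinc_le_sqrt (h_ne hx))) (sqrt_nonneg _)
  rw [(h_deriv (h_ne hx)).deriv]
  calc
    0 ≤ 1 - -deriv sinc x / √(1 - sinc x ^ 2) := sub_nonneg.2 h_ratio
    _ = 1 - -(1 / √(1 - sinc x ^ 2)) * deriv sinc x := by ring

lemma arccos_sinc_le_self {x : ℝ} (hx : 0 ≤ x) : arccos (sinc x) ≤ x := by
  simpa using monotoneOn_sub_arccos_sinc self_mem_Ici hx hx

lemma cos_sub_arccos (x : ℝ) {s : ℝ} (hs : |s| ≤ 1) :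
    cos (x - arccos s) = cos x * s + sin x * √(1 - s ^ 2) := by
  rw [cos_sub, cos_arccos (abs_le.1 hs).1 (abs_le.1 hs).2, sin_arccos]

theorem f2_sub_sqrt_f1f3_monotone_on_Ioc_pi_general (κ₁ κ₂ : ℝ) (h_pos : 0 < κ₁) (h_le : κ₁ ≤ κ₂)
    (h_angle : κ₂ - arccos (sin κ₂ / κ₂) ≤ π) :
    (1 - cos κ₁ * (sin κ₁ / κ₁)) - sin κ₁ * √(1 - (sin κ₁ / κ₁) ^ 2)
      ≤ (1 - cos κ₂ * (sin κ₂ / κ₂)) - sin κ₂ * √(1 - (sin κ₂ / κ₂) ^ 2) := by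
  have h_pos₂ : 0 < κ₂ := h_pos.trans_le h_le
  rw [← sinc_of_ne_zero h_pos₂.ne'] at h_angle
  rw [← sinc_of_ne_zero h_pos.ne', ← sinc_of_ne_zero h_pos₂.ne', sub_sub, sub_sub,
    ← cos_sub_arccos κ₁ (abs_sinc_le_one κ₁), ← cos_sub_arccos κ₂ (abs_sinc_le_one κ₂)]
  have h_mono : κ₁ - arccos (sinc κ₁) ≤ κ₂ - arccos (sinc κ₂) :=
    monotoneOn_sub_arccos_sinc h_pos.le h_pos₂.le h_le
  have h_nonneg : 0 ≤ κ₁ - arccos (sinc κ₁) := sub_nonneg.2 (arccos_sinc_le_self h_pos.le)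
  exact sub_le_sub_left (cos_le_cos_of_nonneg_of_le_pi h_nonneg h_angle h_mono) 1

/-- The function `κ ↦ (1 − cos κ · (sin κ)/κ) − sin κ · √(1 − ((sin κ)/κ)²)`
is monotone non-decreasing on `(0, π]`. -/
theorem f2_sub_sqrt_f1f3_monotone_on_Ioc_pi :
    ∀ κ₁ κ₂ : ℝ, 0 < κ₁ → κ₁ ≤ κ₂ → κ₂ ≤ Real.pi →
      (1 - Real.cos κ₁ * (Real.sin κ₁ / κ₁))
          - Real.sin κ₁ * Real.sqrt (1 - (Real.sin κ₁ / κ₁) ^ 2)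
        ≤ (1 - Real.cos κ₂ * (Real.sin κ₂ / κ₂))
          - Real.sin κ₂ * Real.sqrt (1 - (Real.sin κ₂ / κ₂) ^ 2) := by
  intro κ₁ κ₂ h_pos h_le h_pi
  exact f2_sub_sqrt_f1f3_monotone_on_Ioc_pi_general κ₁ κ₂ h_pos h_le
    ((sub_le_self κ₂ (arccos_nonneg _)).trans h_pi)
end

section
/- For every κ with 0 < κ ≤ π, one has 1 − cos κ · (sin κ)/κ ≥ sin κ · √(1 − ((sin κ)/κ)²), i.e. f₂(κ) ≥ √(f₁(κ) f₃(κ)) where f₁(κ) = 1 − cos²κ, f₂(κ) = 1 − cos κ (sin κ)/κ, and f₃(κ) = 1 − ((sin κ)/κ)². -/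
theorem mul_add_sqrt_one_sub_sq_mul_sqrt_one_sub_sq_le_one {x y : ℝ}
    (hx : |x| ≤ 1) (hy : |y| ≤ 1) :
    x * y + √(1 - x ^ 2) * √(1 - y ^ 2) ≤ 1 := by
  obtain ⟨neg_one_le_x, x_le_one⟩ := abs_le.mp hx
  obtain ⟨neg_one_le_y, y_le_one⟩ := abs_le.mp hy
  calc x * y + √(1 - x ^ 2) * √(1 - y ^ 2)
      = Real.cos (Real.arccos x - Real.arccos y) := by
        rw [Real.cos_sub, Real.cos_arccos neg_one_le_x x_le_one,
          Real.cos_arccos neg_one_le_y y_le_one, Real.sin_arccos, Real.sin_arccos]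
    _ ≤ 1 := Real.cos_le_one _

theorem f2_ge_sqrt_f1f3_on_Ioc_pi_general (κ : ℝ) :
    1 - Real.cos κ * Real.sinc κ ≥ |Real.sin κ| * √(1 - Real.sinc κ ^ 2) := by
  rw [Real.abs_sin_eq_sqrt_one_sub_cos_sq, ge_iff_le, le_sub_iff_add_le']
  exact mul_add_sqrt_one_sub_sq_mul_sqrt_one_sub_sq_le_one
    (Real.abs_cos_le_one κ) (Real.abs_sinc_le_one κ)

/-- For `0 < κ ≤ π` one has `f₂(κ) ≥ √(f₁(κ) f₃(κ))`, in the form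
`1 − cos κ · (sin κ)/κ ≥ sin κ · √(1 − ((sin κ)/κ)²)`
(on `(0, π]`, `√(f₁(κ)) = sin κ`). -/
theorem f2_ge_sqrt_f1f3_on_Ioc_pi :
    ∀ κ : ℝ, 0 < κ → κ ≤ Real.pi →
      1 - Real.cos κ * (Real.sin κ / κ)
        ≥ Real.sin κ * Real.sqrt (1 - (Real.sin κ / κ) ^ 2) := by
  intro κ κ_pos κ_le_pi
  rw [← Real.sinc_of_ne_zero κ_pos.ne',
    ← abs_of_nonneg (Real.sin_nonneg_of_nonneg_of_le_pi κ_pos.le κ_le_pi)]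
  exact f2_ge_sqrt_f1f3_on_Ioc_pi_general κ
end

section
/- As κ → ∞, the function (cosh κ · (sinh κ)/κ − 1) − sinh κ · √(((sinh κ)/κ)² − 1) behaves asymptotically as κ/2 − 1; precisely, the difference ((cosh κ · (sinh κ)/κ − 1) − sinh κ · √(((sinh κ)/κ)² − 1)) − (κ/2 − 1) tends to 0 as κ → ∞. -/
open Filter

/-!
Put `s = sinh κ / κ` and `r = √(s² - 1)`. Since `cosh κ = sinh κ + exp (-κ)`, the function equals
`exp (-κ) * s + κ * (s * (s - r)) - 1`, and `(s - r) * (s + r) = 1` turns `s * (s - r)` into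
`1 / 2 + (s - r) ^ 2 / 2`. The first half produces `κ / 2`, and the error that remains,
`exp (-κ) * s + κ * (s - r) ^ 2 / 2`, tends to `0` because `s - r ≤ 1 / s` and `sinh` outgrows
every power.
-/

section SubSqrt

variable {a s : ℝ}

lemma mul_sub_sqrt_sq_sub (h : a ≤ s ^ 2) :
    s * (s - √(s ^ 2 - a)) = (a + (s - √(s ^ 2 - a)) ^ 2) / 2 := by
  linear_combination -(1 / 2) * Real.sq_sqrt (sub_nonneg.mpr h)

lemma sqrt_sq_sub_le_self (ha : 0 ≤ a) (hs : 0 ≤ s) : √(s ^ 2 - a) ≤ s :=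
  Real.sqrt_le_iff.mpr ⟨hs, sub_le_self _ ha⟩

lemma sub_sqrt_sq_sub_le_div (ha : 0 ≤ a) (hs : 0 < s) (h : a ≤ s ^ 2) :
    s - √(s ^ 2 - a) ≤ a / s := by
  have hsub : 0 ≤ s - √(s ^ 2 - a) := sub_nonneg.mpr (sqrt_sq_sub_le_self ha hs.le)
  rw [le_div_iff₀ hs]
  calc (s - √(s ^ 2 - a)) * s
      ≤ (s - √(s ^ 2 - a)) * (s + √(s ^ 2 - a)) := by
        gcongr
        exact le_add_of_nonneg_right (Real.sqrt_nonneg _)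
    _ = a := by linear_combination -Real.sq_sqrt (sub_nonneg.mpr h)

end SubSqrt

lemma one_le_sinh_div_self {x : ℝ} (hx : x ≠ 0) : 1 ≤ Real.sinh x / x := by
  rcases hx.lt_or_gt with hneg | hpos
  · exact (one_le_div_of_neg hneg).mpr (Real.sinh_le_self_iff.mpr hneg.le)
  · exact (one_le_div hpos).mpr (Real.self_le_sinh_iff.mpr hpos.le)

lemma tendsto_exp_neg_mul_sinh_atTop :
    Tendsto (fun x : ℝ => Real.exp (-x) * Real.sinh x) atTop (nhds (1 / 2)) := by
  have heq (x : ℝ) : Real.exp (-x) * Real.sinh x = (1 - Real.exp (-x) ^ 2) / 2 := by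
    have hexp : Real.exp (-x) * Real.exp x = 1 := by
      rw [← Real.exp_add, neg_add_cancel, Real.exp_zero]
    rw [Real.sinh_eq]
    linear_combination hexp / 2
  simp only [heq]
  simpa using ((Real.tendsto_exp_neg_atTop_nhds_zero.pow 2).const_sub 1).div_const 2

lemma tendsto_pow_div_sinh_atTop (n : ℕ) :
    Tendsto (fun x : ℝ => x ^ n / Real.sinh x) atTop (nhds 0) := by
  have hquot := (Real.tendsto_pow_mul_exp_neg_atTop_nhds_zero n).div
    tendsto_exp_neg_mul_sinh_atTop (by norm_num)
  rw [zero_div] at hquot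
  refine hquot.congr fun x => ?_
  rw [Pi.div_apply, mul_comm, mul_div_mul_left _ _ (Real.exp_ne_zero _)]

lemma tendsto_exp_neg_mul_sinh_div_self_atTop :
    Tendsto (fun κ : ℝ => Real.exp (-κ) * (Real.sinh κ / κ)) atTop (nhds 0) := by
  simpa only [mul_div_assoc, id] using tendsto_exp_neg_mul_sinh_atTop.div_atTop tendsto_id

lemma tendsto_mul_sinh_div_self_sub_sqrt_sq_atTop :
    Tendsto (fun κ : ℝ => κ * (Real.sinh κ / κ - √((Real.sinh κ / κ) ^ 2 - 1)) ^ 2)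
      atTop (nhds 0) := by
  have hbound : Tendsto (fun κ : ℝ => κ ^ 2 / Real.sinh κ * (κ ^ 1 / Real.sinh κ))
      atTop (nhds 0) := by
    simpa only [mul_zero] using (tendsto_pow_div_sinh_atTop 2).mul (tendsto_pow_div_sinh_atTop 1)
  refine squeeze_zero' ?_ ?_ hbound
  all_goals filter_upwards [eventually_gt_atTop 0] with κ hκ
  · positivity
  · have h_one_le : 1 ≤ Real.sinh κ / κ := one_le_sinh_div_self hκ.ne'
    have h_pos : 0 < Real.sinh κ / κ := one_pos.trans_le h_one_le
    have h_sub_nonneg : 0 ≤ Real.sinh κ / κ - √((Real.sinh κ / κ) ^ 2 - 1) :=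
      sub_nonneg.mpr (sqrt_sq_sub_le_self zero_le_one h_pos.le)
    calc κ * (Real.sinh κ / κ - √((Real.sinh κ / κ) ^ 2 - 1)) ^ 2
        ≤ κ * (1 / (Real.sinh κ / κ)) ^ 2 := by
          gcongr
          exact sub_sqrt_sq_sub_le_div zero_le_one h_pos (one_le_pow₀ h_one_le)
      _ = κ ^ 2 / Real.sinh κ * (κ ^ 1 / Real.sinh κ) := by
          rw [one_div_div]
          ring

lemma cosh_mul_sub_sinh_mul_sqrt_sub_eq {κ : ℝ} (hκ : κ ≠ 0) :
    ((Real.cosh κ * (Real.sinh κ / κ) - 1)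
        - Real.sinh κ * √((Real.sinh κ / κ) ^ 2 - 1)) - (κ / 2 - 1)
      = Real.exp (-κ) * (Real.sinh κ / κ)
        + κ * (Real.sinh κ / κ - √((Real.sinh κ / κ) ^ 2 - 1)) ^ 2 / 2 := by
  have hsplit := mul_sub_sqrt_sq_sub (one_le_pow₀ (one_le_sinh_div_self hκ) (n := 2))
  have hsinh : Real.sinh κ = κ * (Real.sinh κ / κ) := (mul_div_cancel₀ _ hκ).symm
  have hcosh : Real.cosh κ = κ * (Real.sinh κ / κ) + Real.exp (-κ) := by
    rw [← hsinh, ← Real.cosh_sub_sinh, add_sub_cancel]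
  linear_combination (Real.sinh κ / κ) * hcosh
    - √((Real.sinh κ / κ) ^ 2 - 1) * hsinh + κ * hsplit

/-- In the negative-curvature case, the function
`f₂(κ) − √(f₁(κ)f₃(κ)) = (cosh κ (sinh κ)/κ − 1) − sinh κ √(((sinh κ)/κ)² − 1)`
behaves asymptotically as `κ/2 − 1`: their difference tends to `0` as
`κ → ∞`. -/
theorem f2_sub_sqrt_f1f3_asymptotic :
    Tendsto (fun κ : ℝ =>
        ((Real.cosh κ * (Real.sinh κ / κ) - 1)
            - Real.sinh κ * Real.sqrt ((Real.sinh κ / κ) ^ 2 - 1))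
          - (κ / 2 - 1))
      atTop (nhds 0) := by
  have herror := tendsto_exp_neg_mul_sinh_div_self_atTop.add
    (tendsto_mul_sinh_div_self_sub_sqrt_sq_atTop.div_const 2)
  rw [zero_div, add_zero] at herror
  refine herror.congr' ?_
  filter_upwards [eventually_ne_atTop 0] with κ hκ
  exact (cosh_mul_sub_sinh_mul_sqrt_sub_eq hκ).symm
end

section
/- Let ℍ denote the hyperbolic upper half-plane {z ∈ ℂ : Im z > 0} with its hyperbolic metric. For every h ≥ 0, the map φ_h : ℍ → ℍ defined by φ_h(z) = Re z + i·(e^h · Im z) is non-expansive: d(φ_h(z), φ_h(w)) ≤ d(z, w) for all z, w ∈ ℍ. -/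
open UpperHalfPlane

/-!
The step multiplies heights by `c = exp h ≥ 1`. It is the dilation `z ↦ c z`, a hyperbolic isometry,
applied after the horizontal compression `x + i y ↦ c⁻¹ x + i y`. The latter is non-expansive
because, for points of prescribed heights, the hyperbolic distance is an increasing function of the
horizontal separation.
-/

theorem dist_le_dist_iff_dist_re_le_of_im_eq {z w z' w' : ℍ} (hz : z'.im = z.im)
    (hw : w'.im = w.im) : dist z' w' ≤ dist z w ↔ dist z'.re w'.re ≤ dist z.re w.re := by
  have two_mul_sqrt_pos : 0 < 2 * √(z.im * w.im) := by positivity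
  calc
    dist z' w' ≤ dist z w ↔ dist (z' : ℂ) w' ≤ dist (z : ℂ) w := by
      rw [UpperHalfPlane.dist_eq, UpperHalfPlane.dist_eq, hz, hw,
        mul_le_mul_iff_right₀ two_pos, Real.arsinh_le_arsinh,
        div_le_div_iff_of_pos_right two_mul_sqrt_pos]
    _ ↔ (z'.re - w'.re) ^ 2 ≤ (z.re - w.re) ^ 2 := by
      rw [Complex.dist_eq_re_im, Complex.dist_eq_re_im, Real.sqrt_le_sqrt_iff (by positivity)]
      simp only [coe_re, coe_im, hz, hw, add_le_add_iff_right]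
    _ ↔ dist z'.re w'.re ≤ dist z.re w.re := sq_le_sq

/-- The horizontal scaling `x + i y ↦ a x + i y` of the upper half-plane, which carries the
contraction of the Euler step. At `a = 0` it is the projection onto the imaginary axis along
horocycles. -/
def scaleRe (a : ℝ) (z : ℍ) : ℍ :=
  ⟨⟨a * z.re, z.im⟩, z.im_pos⟩

@[simp]
theorem scaleRe_re (a : ℝ) (z : ℍ) : (scaleRe a z).re = a * z.re :=
  rfl

@[simp]
theorem scaleRe_im (a : ℝ) (z : ℍ) : (scaleRe a z).im = z.im :=
  rfl

theorem dist_scaleRe_le {a : ℝ} (ha : |a| ≤ 1) (z w : ℍ) :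
    dist (scaleRe a z) (scaleRe a w) ≤ dist z w := by
  refine (dist_le_dist_iff_dist_re_le_of_im_eq (scaleRe_im a z) (scaleRe_im a w)).2 ?_
  calc
    dist (scaleRe a z).re (scaleRe a w).re = |a| * dist z.re w.re := by
      rw [scaleRe_re, scaleRe_re, Real.dist_eq, Real.dist_eq, ← mul_sub, abs_mul]
    _ ≤ dist z.re w.re := mul_le_of_le_one_left dist_nonneg ha

theorem smul_scaleRe_inv (c : {x : ℝ // 0 < x}) (z : ℍ) :
    c • scaleRe (c : ℝ)⁻¹ z = ⟨⟨z.re, c * z.im⟩, mul_pos c.2 z.im_pos⟩ := by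
  apply UpperHalfPlane.ext_re_im
  · simp [mul_inv_cancel_left₀ c.2.ne']
  · simp

/-- One step of the Geodesic Explicit Euler method with step size `h ≥ 0` for
the vector field `X = y ∂_y` on the hyperbolic upper half-plane, namely
`z ↦ Re z + i·(e^h · Im z)`, is non-expansive for the hyperbolic distance. -/
theorem gee_step_nonexpansive_upper_half_plane (h : ℝ) (hh : 0 ≤ h) :
    ∀ z w : UpperHalfPlane,
      dist ((⟨⟨z.re, Real.exp h * z.im⟩, by
              simpa using mul_pos (Real.exp_pos h) z.im_pos⟩ : UpperHalfPlane))
           ((⟨⟨w.re, Real.exp h * w.im⟩, by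
              simpa using mul_pos (Real.exp_pos h) w.im_pos⟩ : UpperHalfPlane))
        ≤ dist z w := by
  intro z w
  let c : {x : ℝ // 0 < x} := ⟨Real.exp h, Real.exp_pos h⟩
  have abs_inv_le_one : |(c : ℝ)⁻¹| ≤ 1 := by
    rw [abs_of_pos (inv_pos.2 c.2)]
    exact inv_le_one_of_one_le₀ (Real.one_le_exp hh)
  calc
    _ = dist (c • scaleRe (c : ℝ)⁻¹ z) (c • scaleRe (c : ℝ)⁻¹ w) := by
      rw [smul_scaleRe_inv, smul_scaleRe_inv]
    _ = dist (scaleRe (c : ℝ)⁻¹ z) (scaleRe (c : ℝ)⁻¹ w) := (isometry_pos_mul c).dist_eq _ _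
    _ ≤ dist z w := dist_scaleRe_le abs_inv_le_one z w
end

section
/- Let E be a finite-dimensional real inner product space and let A : E → E be a linear map whose range coincides with the range of its adjoint: range(A) = range(A*). Then there exists α ∈ ℝ such that ⟨A v, v⟩ ≤ −α‖A v‖² for all v ∈ E. -/
open scoped RealInnerProductSpace

/-!
If `A x = A v`, then `v - x ∈ ker A`, and `ker A` is orthogonal to `range A* = range A`; hence
`⟪A v, v⟫ = ⟪A v, x⟫`. When `A` has closed range, the open mapping theorem supplies such an `x` with
`‖x‖ ≤ C * ‖A v‖`, so Cauchy–Schwarz gives the claim with `α = -C`.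
-/

section BoundedPreimages

variable {𝕜 E F : Type*} [NontriviallyNormedField 𝕜]
  [NormedAddCommGroup E] [NormedSpace 𝕜 E] [CompleteSpace E]
  [NormedAddCommGroup F] [NormedSpace 𝕜 F] [CompleteSpace F]

lemma exists_map_eq_and_norm_le_of_isClosed_range (A : E →L[𝕜] F)
    (hclosed : IsClosed (A.range : Set F)) :
    ∃ C : ℝ, ∀ v, ∃ x, A x = A v ∧ ‖x‖ ≤ C * ‖A v‖ := by
  have : CompleteSpace A.range := hclosed.completeSpace_coe
  obtain ⟨C, -, hC⟩ :=
    A.rangeRestrict.exists_preimage_norm_le A.toLinearMap.surjective_rangeRestrict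
  refine ⟨C, fun v ↦ ?_⟩
  obtain ⟨x, hx, hxC⟩ := hC (A.rangeRestrict v)
  exact ⟨x, congrArg Subtype.val hx, hxC⟩

end BoundedPreimages

section Cocoercivity

variable {𝕜 E : Type*} [RCLike 𝕜] [NormedAddCommGroup E] [InnerProductSpace 𝕜 E]

lemma inner_map_self_eq_of_range_le_orthogonal_ker {A : E →ₗ[𝕜] E}
    (hA : A.range ≤ A.kerᗮ) {v x : E} (hx : A x = A v) :
    inner 𝕜 (A v) v = inner 𝕜 (A v) x := by
  have hker : v - x ∈ A.ker := LinearMap.sub_mem_ker_iff.mpr hx.symm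
  have horth : inner 𝕜 (A v) (v - x) = 0 :=
    Submodule.inner_left_of_mem_orthogonal hker (hA (A.mem_range_self v))
  rwa [inner_sub_right, sub_eq_zero] at horth

lemma re_inner_map_self_le_of_range_le_orthogonal_ker {A : E →ₗ[𝕜] E}
    (hA : A.range ≤ A.kerᗮ) {v x : E} {C : ℝ} (hx : A x = A v) (hxC : ‖x‖ ≤ C * ‖A v‖) :
    RCLike.re (inner 𝕜 (A v) v) ≤ C * ‖A v‖ ^ 2 :=
  calc
    RCLike.re (inner 𝕜 (A v) v) = RCLike.re (inner 𝕜 (A v) x) := by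
      rw [inner_map_self_eq_of_range_le_orthogonal_ker hA hx]
    _ ≤ ‖A v‖ * ‖x‖ := re_inner_le_norm _ _
    _ ≤ ‖A v‖ * (C * ‖A v‖) := by gcongr
    _ = C * ‖A v‖ ^ 2 := by ring

theorem exists_cocoercivity_constant_of_range_eq_range_adjoint_general [CompleteSpace E]
    (A : E →L[𝕜] E) (hclosed : IsClosed (A.range : Set E)) (hA : A.range ≤ A.kerᗮ) :
    ∃ α : ℝ, ∀ v : E, RCLike.re (inner 𝕜 (A v) v) ≤ -α * ‖A v‖ ^ 2 := by
  obtain ⟨C, hC⟩ := exists_map_eq_and_norm_le_of_isClosed_range A hclosed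
  refine ⟨-C, fun v ↦ ?_⟩
  obtain ⟨x, hx, hxC⟩ := hC v
  rw [neg_neg]
  exact re_inner_map_self_le_of_range_le_orthogonal_ker hA hx hxC

end Cocoercivity

/-- If a linear operator `A` on a finite-dimensional real inner product space
has `range(A) = range(A*)`, then a cocoercivity constant `α` exists, i.e.
`⟪A v, v⟫ ≤ −α‖A v‖²` for all `v`. -/
theorem exists_cocoercivity_constant_of_range_eq_range_adjoint
    {E : Type*} [NormedAddCommGroup E] [InnerProductSpace ℝ E]
    [FiniteDimensional ℝ E] (A : E →ₗ[ℝ] E)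
    (hrange : LinearMap.range A = LinearMap.range (LinearMap.adjoint A)) :
    ∃ α : ℝ, ∀ v : E, ⟪A v, v⟫ ≤ -α * ‖A v‖ ^ 2 := by
  have := FiniteDimensional.complete ℝ E
  exact exists_cocoercivity_constant_of_range_eq_range_adjoint_general A.toContinuousLinearMap
    (Submodule.closed_of_finiteDimensional _) (hrange.trans A.orthogonal_ker.symm).le
end

section
/- Let ε, φ ∈ ℝ with cos φ ≠ 0 and sin φ ≠ 0. Consider the 2×2 real matrices g = [[1, 0], [0, cos²φ]] and A = [[−ε sin φ, cos φ sin φ], [−tan φ, −ε sin φ]]. Then for every v ∈ ℝ², vᵀ g (A v) = −(ε / ((1 + ε²) sin φ)) · ((A v)ᵀ g (A v)). -/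
open Matrix

/-!
Let `J` be the quarter turn of the tangent plane for the metric `g = diag(1, cos²φ)`. Then
`A = -(ε sin φ) • 1 - sin φ • J`, where `J v` is orthogonal to `v` and has the same norm. Hence
`⟨v, A v⟩ = -ε sin φ ⟨v, v⟩`, while Pythagoras gives `⟨A v, A v⟩ = (1 + ε²) sin²φ ⟨v, v⟩`, and the
cocoercivity constant is minus the quotient of the two factors.
-/

section BilinForm

variable {R M : Type*} [CommSemiring R] [AddCommMonoid M] [Module R M]
  {B : LinearMap.BilinForm R M} {v w : M}

theorem bilinForm_smul_add_smul_right_of_ortho (hvw : B v w = 0) (a b : R) :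
    B v (a • v + b • w) = a * B v v := by
  rw [map_add, map_smul, map_smul, hvw, smul_zero, add_zero, smul_eq_mul]

theorem bilinForm_smul_add_smul_self_of_ortho (hvw : B v w = 0) (hwv : B w v = 0)
    (hww : B w w = B v v) (a b : R) :
    B (a • v + b • w) (a • v + b • w) = (a ^ 2 + b ^ 2) * B v v := by
  simp only [map_add, map_smul, LinearMap.add_apply, LinearMap.smul_apply, smul_eq_mul,
    hvw, hwv, hww]
  ring

end BilinForm

section BilinFormOverField

variable {K V : Type*} [Field K] [AddCommGroup V] [Module K V]
  {B : LinearMap.BilinForm K V} {v w : V}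

theorem bilinForm_smul_add_smul_right_eq_div_mul_self (hvw : B v w = 0) (hwv : B w v = 0)
    (hww : B w w = B v v) {a b : K} (hab : a ^ 2 + b ^ 2 ≠ 0) :
    B v (a • v + b • w) = a / (a ^ 2 + b ^ 2) * B (a • v + b • w) (a • v + b • w) := by
  rw [bilinForm_smul_add_smul_right_of_ortho hvw,
    bilinForm_smul_add_smul_self_of_ortho hvw hwv hww, ← mul_assoc, div_mul_cancel₀ a hab]

end BilinFormOverField

section WarpedMetric

variable {K : Type*} [Field K]

/-- The inner product of the warped metric `dr² + c² dθ²` at a point where the warping function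
takes the value `c`, in the coordinate frame `(∂_r, ∂_θ)`. The round sphere has `r = φ` and
`c = cos φ`. -/
def warpedMetric (c : K) : LinearMap.BilinForm K (Fin 2 → K) :=
  Matrix.toBilin' !![1, 0; 0, c ^ 2]

/-- The quarter turn of the tangent plane for `warpedMetric c`, as a matrix in the coordinate frame
`(∂_r, ∂_θ)`: for `c ≠ 0` it sends the orthonormal frame `(∂_r, c⁻¹ ∂_θ)` to `(c⁻¹ ∂_θ, -∂_r)`. -/
def quarterTurn (c : K) : Matrix (Fin 2) (Fin 2) K :=
  !![0, -c; c⁻¹, 0]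

theorem warpedMetric_apply (c : K) (v w : Fin 2 → K) :
    warpedMetric c v w = v ⬝ᵥ !![1, 0; 0, c ^ 2] *ᵥ w :=
  Matrix.toBilin'_apply' _ v w

theorem warpedMetric_apply_eq_add (c : K) (v w : Fin 2 → K) :
    warpedMetric c v w = v 0 * w 0 + c ^ 2 * (v 1 * w 1) := by
  simp [warpedMetric_apply, dotProduct, Fin.sum_univ_two, mul_left_comm]

theorem warpedMetric_isSymm (c : K) : (warpedMetric c).IsSymm :=
  ⟨fun v w ↦ by simp [warpedMetric_apply_eq_add, mul_comm]⟩

theorem quarterTurn_mulVec (c : K) (v : Fin 2 → K) :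
    quarterTurn c *ᵥ v = ![-c * v 1, c⁻¹ * v 0] := by
  ext i
  fin_cases i <;> simp [quarterTurn, mulVec, dotProduct, Fin.sum_univ_two]

theorem warpedMetric_apply_quarterTurn_eq_zero (c : K) (v : Fin 2 → K) :
    warpedMetric c v (quarterTurn c *ᵥ v) = 0 := by
  have hc : c ^ 2 * c⁻¹ = c := by rw [sq, mul_self_mul_inv]
  calc warpedMetric c v (quarterTurn c *ᵥ v)
      = v 0 * (-c * v 1) + c ^ 2 * c⁻¹ * (v 1 * v 0) := by
        simp only [warpedMetric_apply_eq_add, quarterTurn_mulVec, cons_val_zero, cons_val_one]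
        ring
    _ = 0 := by rw [hc]; ring

theorem warpedMetric_quarterTurn_quarterTurn {c : K} (hc : c ≠ 0) (v w : Fin 2 → K) :
    warpedMetric c (quarterTurn c *ᵥ v) (quarterTurn c *ᵥ w) = warpedMetric c v w := by
  simp only [warpedMetric_apply_eq_add, quarterTurn_mulVec, cons_val_zero, cons_val_one]
  field_simp
  ring

end WarpedMetric

theorem sphere_covariantDeriv_eq_smul_add_smul_quarterTurn (ε φ : ℝ) :
    !![-ε * Real.sin φ, Real.cos φ * Real.sin φ; -Real.tan φ, -ε * Real.sin φ] =
      (-ε * Real.sin φ) • (1 : Matrix (Fin 2) (Fin 2) ℝ) +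
        (-Real.sin φ) • quarterTurn (Real.cos φ) := by
  ext i j
  fin_cases i <;> fin_cases j <;>
    simp [quarterTurn, Real.tan_eq_sin_div_cos, div_eq_mul_inv, mul_comm]

/-- On `S²` with metric matrix `g = diag(1, cos²φ)`, the connection matrix `A`
of the vector field `X = ε cos φ ∂_φ + ∂_θ` satisfies the cocoercivity
identity `vᵀ g (A v) = −(ε / ((1 + ε²) sin φ)) · ((A v)ᵀ g (A v))`. -/
theorem sphere_example_cocoercivity (ε φ : ℝ) (hcos : Real.cos φ ≠ 0)
    (hsin : Real.sin φ ≠ 0) :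
    ∀ v : Fin 2 → ℝ,
      v ⬝ᵥ ((!![1, 0; 0, Real.cos φ ^ 2] : Matrix (Fin 2) (Fin 2) ℝ).mulVec
          ((!![-ε * Real.sin φ, Real.cos φ * Real.sin φ;
               -Real.tan φ, -ε * Real.sin φ] : Matrix (Fin 2) (Fin 2) ℝ).mulVec v))
        = -(ε / ((1 + ε ^ 2) * Real.sin φ)) *
            (((!![-ε * Real.sin φ, Real.cos φ * Real.sin φ;
                 -Real.tan φ, -ε * Real.sin φ] : Matrix (Fin 2) (Fin 2) ℝ).mulVec v) ⬝ᵥ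
              ((!![1, 0; 0, Real.cos φ ^ 2] : Matrix (Fin 2) (Fin 2) ℝ).mulVec
                ((!![-ε * Real.sin φ, Real.cos φ * Real.sin φ;
                     -Real.tan φ, -ε * Real.sin φ] : Matrix (Fin 2) (Fin 2) ℝ).mulVec v))) := by
  intro v
  have hJ := warpedMetric_apply_quarterTurn_eq_zero (Real.cos φ) v
  have hnorm : (-ε * Real.sin φ) ^ 2 + (-Real.sin φ) ^ 2 = (1 + ε ^ 2) * Real.sin φ ^ 2 := by ring
  have hnorm_ne : (-ε * Real.sin φ) ^ 2 + (-Real.sin φ) ^ 2 ≠ 0 := by rw [hnorm]; positivity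
  have hcoeff : -(ε / ((1 + ε ^ 2) * Real.sin φ)) =
      -ε * Real.sin φ / ((-ε * Real.sin φ) ^ 2 + (-Real.sin φ) ^ 2) := by
    rw [hnorm]
    field_simp
  rw [← warpedMetric_apply, ← warpedMetric_apply,
    sphere_covariantDeriv_eq_smul_add_smul_quarterTurn, add_mulVec, smul_mulVec, smul_mulVec,
    one_mulVec, hcoeff]
  exact bilinForm_smul_add_smul_right_eq_div_mul_self hJ
    ((warpedMetric_isSymm _).isRefl _ _ hJ) (warpedMetric_quarterTurn_quarterTurn hcos v v) hnorm_ne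
end
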